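/- Let T > 0, let γ : [0,T] → ℝⁿ be four times continuously differentiable, assume the kernel function K(x,y) = ⟪k y, k x⟫ is four times continuously differentiable on ℝⁿ × ℝⁿ, and let Γ_γ ∈ H be the occupation kernel of γ. Then there exists a constant C ≥ 0 such that for every even integer F ≥ 2, setting h := T/F, t_i := i·h for i = 0,…,F, and Γ̂ := (h/3)·( k(γ t₀) + 4·Σ_{i=1}^{F/2} k(γ t_{2i−1}) + 2·Σ_{i=1}^{F/2−1} k(γ t_{2i}) + k(γ t_F) ) (the Simpson's rule approximation), one has ‖Γ_γ − Γ̂‖² ≤ C · h⁴. -/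

import Mathlib

open scoped RealInnerProductSpace

/-- Rearranging the composite Simpson sum into a sum over double panels. -/
lemma simpson_sum_rearrange {E : Type*} [AddCommGroup E] [Module ℝ E] (a : ℕ → E) (m : ℕ) :
    a 0 + (4 : ℝ) • ∑ i ∈ Finset.Icc 1 (m + 1), a (2 * i - 1)
      + (2 : ℝ) • ∑ i ∈ Finset.Icc 1 m, a (2 * i) + a (2 * (m + 1))
    = ∑ j ∈ Finset.range (m + 1), (a (2 * j) + (4 : ℝ) • a (2 * j + 1) + a (2 * (j + 1))) := by
  induction m with
  | zero => simp
  | succ m ih =>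
    rw [Finset.sum_range_succ, ← ih, Finset.sum_Icc_succ_top (by omega : 1 ≤ m + 1 + 1),
      Finset.sum_Icc_succ_top (by omega : 1 ≤ m + 1) (fun i => a (2 * i))]
    have : 2 * (m + 1 + 1) - 1 = 2 * (m + 1) + 1 := by omega
    rw [this]
    module

/-- Simpson error on one double panel, given a cubic approximation. -/
lemma simpson_panel (f : ℝ → ℝ) (a h B c0 c1 c2 c3 : ℝ) (hh : 0 ≤ h)
    (hf : ContinuousOn f (Set.Icc a (a + 2 * h)))
    (hB : ∀ t ∈ Set.Icc a (a + 2 * h),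
      |f t - (c0 + c1 * (t - a) + c2 * (t - a) ^ 2 + c3 * (t - a) ^ 3)| ≤ B) :
    |(∫ t in a..(a + 2 * h), f t) - h / 3 * (f a + 4 * f (a + h) + f (a + 2 * h))|
      ≤ 4 * h * B := by
  set p : ℝ → ℝ := fun t => c0 + c1 * (t - a) + c2 * (t - a) ^ 2 + c3 * (t - a) ^ 3 with hp
  have hpc : Continuous p := by fun_prop
  have hfi : IntervalIntegrable f MeasureTheory.volume a (a + 2 * h) :=
    ContinuousOn.intervalIntegrable (by rwa [Set.uIcc_of_le (by linarith)])
  have hpi : ∫ t in a..(a + 2 * h), p t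
      = h / 3 * (p a + 4 * p (a + h) + p (a + 2 * h)) := by
    have hd : ∀ t ∈ Set.uIcc a (a + 2 * h), HasDerivAt (fun t => c0 * (t - a)
        + c1 * (t - a) ^ 2 / 2 + c2 * (t - a) ^ 3 / 3 + c3 * (t - a) ^ 4 / 4) (p t) t := by
      intro t _
      have h1 : HasDerivAt (fun t : ℝ => t - a) 1 t := (hasDerivAt_id t).sub_const a
      have h2 := (((h1.const_mul c0).add (((h1.pow 2).const_mul c1).div_const 2)).add
        (((h1.pow 3).const_mul c2).div_const 3)).add (((h1.pow 4).const_mul c3).div_const 4)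
      refine h2.congr_deriv ?_
      simp only [hp]; push_cast; ring
    rw [intervalIntegral.integral_eq_sub_of_hasDerivAt hd (hpc.intervalIntegrable _ _)]
    simp only [hp]; ring
  have h1 : |∫ t in a..(a + 2 * h), (f t - p t)| ≤ B * |a + 2 * h - a| := by
    rw [← Real.norm_eq_abs]
    apply intervalIntegral.norm_integral_le_of_norm_le_const
    intro t ht
    rw [Set.uIoc_of_le (by linarith)] at ht
    exact hB t ⟨ht.1.le, ht.2⟩
  rw [intervalIntegral.integral_sub hfi (hpc.intervalIntegrable _ _), hpi,
    abs_of_nonneg (by linarith : 0 ≤ a + 2 * h - a)] at h1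
  have e0 := hB a ⟨by linarith, by linarith⟩
  have e1 := hB (a + h) ⟨by linarith, by linarith⟩
  have e2 := hB (a + 2 * h) ⟨by linarith, by linarith⟩
  change |f _ - p _| ≤ B at e0 e1 e2
  rw [abs_le] at *
  constructor <;> nlinarith [mul_le_mul_of_nonneg_left e0.1 hh, mul_le_mul_of_nonneg_left e0.2 hh,
    mul_le_mul_of_nonneg_left e1.1 hh, mul_le_mul_of_nonneg_left e1.2 hh,
    mul_le_mul_of_nonneg_left e2.1 hh, mul_le_mul_of_nonneg_left e2.2 hh]

/-- Composite Simpson error bound. -/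
lemma simpson_composite (f : ℝ → ℝ) (T M : ℝ) (hT : 0 < T)
    (hf : ContDiffOn ℝ 4 f (Set.Icc 0 T))
    (hM : ∀ t ∈ Set.Icc 0 T, ‖iteratedFDerivWithin ℝ 4 f (Set.Icc 0 T) t‖ ≤ M)
    (m : ℕ) (h : ℝ) (hh : 0 < h) (hmh : (2 * (m : ℝ)) * h = T) :
    |(∫ t in (0:ℝ)..T, f t) - h / 3 * ∑ j ∈ Finset.range m,
      (f (((2 * j : ℕ) : ℝ) * h) + 4 * f (((2 * j + 1 : ℕ) : ℝ) * h)
        + f (((2 * (j + 1) : ℕ) : ℝ) * h))| ≤ 6 * T * M * h ^ 4 := by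
  have hM0 : 0 ≤ M := (norm_nonneg _).trans (hM 0 ⟨le_rfl, hT.le⟩)
  have hsub : ∀ j < m, Set.Icc (2 * (j : ℝ) * h) (2 * (j : ℝ) * h + 2 * h) ⊆ Set.Icc 0 T := by
    intro j hj
    apply Set.Icc_subset_Icc
    · positivity
    · have : (j : ℝ) + 1 ≤ m := by exact_mod_cast hj
      nlinarith
  have hpan : ∀ j < m, |(∫ t in (2 * (j : ℝ) * h)..(2 * (j : ℝ) * h + 2 * h), f t)
      - h / 3 * (f (2 * (j : ℝ) * h) + 4 * f (2 * (j : ℝ) * h + h) + f (2 * (j : ℝ) * h + 2 * h))|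
      ≤ 4 * h * (M * (2 * h) ^ 4 / 6) := by
    intro j hj
    have hs := hsub j hj
    set a := 2 * (j : ℝ) * h
    have hab : a < a + 2 * h := by linarith
    have hfa := hf.mono hs
    refine simpson_panel f a h _ (f a) (iteratedDerivWithin 1 f (Set.Icc a (a + 2 * h)) a)
      (iteratedDerivWithin 2 f (Set.Icc a (a + 2 * h)) a / 2)
      (iteratedDerivWithin 3 f (Set.Icc a (a + 2 * h)) a / 6) hh.le hfa.continuousOn ?_
    intro t ht
    have key := taylor_mean_remainder_bound (n := 3) (C := M) hab.le
      (by norm_num; exact hfa) ht (by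
        intro y hy
        rw [← norm_iteratedFDerivWithin_eq_norm_iteratedDerivWithin,
          iteratedFDerivWithin_subset hs (uniqueDiffOn_Icc hab) (uniqueDiffOn_Icc hT)
            (by norm_num; exact hf) hy]
        exact hM y (hs hy))
    rw [taylor_within_apply, Real.norm_eq_abs] at key
    simp only [Finset.sum_range_succ, Finset.sum_range_zero, smul_eq_mul, Nat.factorial,
      iteratedDerivWithin_zero] at key
    norm_num at key
    refine le_trans (le_of_eq ?_) (key.trans ?_)
    · congr 1; simp only [iteratedDerivWithin_one]; ring
    · have : (t - a) ^ 4 ≤ (2 * h) ^ 4 :=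
        pow_le_pow_left₀ (by linarith [ht.1]) (by linarith [ht.2]) 4
      gcongr
  have hint : ∫ t in (0:ℝ)..T, f t
      = ∑ j ∈ Finset.range m, ∫ t in (2 * (j : ℝ) * h)..(2 * (j : ℝ) * h + 2 * h), f t := by
    have := intervalIntegral.sum_integral_adjacent_intervals (f := f)
      (μ := MeasureTheory.volume) (a := fun j : ℕ => 2 * (j : ℝ) * h) (n := m) (by
        intro j hj
        apply ContinuousOn.intervalIntegrable
        have e : 2 * ((j + 1 : ℕ) : ℝ) * h = 2 * (j : ℝ) * h + 2 * h := by push_cast; ring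
        rw [e, Set.uIcc_of_le (by linarith)]
        exact hf.continuousOn.mono (hsub j hj))
    simp only [hmh] at this
    rw [show (2 * ((0:ℕ):ℝ) * h) = 0 by simp] at this
    rw [← this]
    refine Finset.sum_congr rfl fun j _ => ?_
    congr 1; push_cast; ring
  rw [hint, Finset.mul_sum, ← Finset.sum_sub_distrib]
  calc _ ≤ ∑ j ∈ Finset.range m, 4 * h * (M * (2 * h) ^ 4 / 6) := by
        refine (Finset.abs_sum_le_sum_abs _ _).trans (Finset.sum_le_sum fun j hj => ?_)
        refine le_trans (le_of_eq ?_) (hpan j (Finset.mem_range.1 hj))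
        have e0 : (((2 * j : ℕ) : ℝ) * h) = 2 * (j : ℝ) * h := by push_cast; ring
        have e1 : (((2 * j + 1 : ℕ) : ℝ) * h) = 2 * (j : ℝ) * h + h := by push_cast; ring
        have e2 : (((2 * (j + 1) : ℕ) : ℝ) * h) = 2 * (j : ℝ) * h + 2 * h := by push_cast; ring
        rw [e0, e1, e2]
    _ = (16 / 3) * T * M * h ^ 4 := by
        rw [Finset.sum_const, Finset.card_range, nsmul_eq_mul, ← hmh]; ring
    _ ≤ 6 * T * M * h ^ 4 := by gcongr; norm_num

/-- Uniform bound on the fourth derivatives of the slices. -/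
lemma slice_bound {E : Type*} [NormedAddCommGroup E] [NormedSpace ℝ E]
    (K : E × E → ℝ) (hK : ContDiff ℝ 4 K) (T : ℝ) (hT : 0 < T) (γ : ℝ → E)
    (hγ : ContDiffOn ℝ 4 γ (Set.Icc 0 T)) :
    ∃ M : ℝ, ∀ s ∈ Set.Icc 0 T, ∀ t ∈ Set.Icc 0 T,
      ‖iteratedFDerivWithin ℝ 4 (fun t => K (γ t, γ s)) (Set.Icc 0 T) t‖ ≤ M := by
  have hu := uniqueDiffOn_Icc hT
  have hle : ∀ i ≤ 4, ((i : ℕ) : WithTop ℕ∞) ≤ 4 := by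
    intro i hi; exact_mod_cast hi
  -- bounds for `γ`
  have hD : ∀ i : ℕ, ∃ D : ℝ, i ≤ 4 → ∀ t ∈ Set.Icc 0 T,
      ‖iteratedFDerivWithin ℝ i γ (Set.Icc 0 T) t‖ ≤ D := by
    intro i
    by_cases hi : i ≤ 4
    · obtain ⟨D, hD⟩ := isCompact_Icc.exists_bound_of_continuousOn
        (hγ.continuousOn_iteratedFDerivWithin (hle i hi) hu)
      exact ⟨D, fun _ => hD⟩
    · exact ⟨0, fun h => absurd h hi⟩
  have hCb : ∀ i : ℕ, ∃ C : ℝ, i ≤ 4 → ∀ s ∈ Set.Icc 0 T, ∀ t ∈ Set.Icc 0 T,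
      ‖iteratedFDeriv ℝ i K (γ t, γ s)‖ ≤ C := by
    intro i
    by_cases hi : i ≤ 4
    · have hcomp : IsCompact ((γ '' Set.Icc 0 T) ×ˢ (γ '' Set.Icc 0 T)) :=
        (isCompact_Icc.image_of_continuousOn hγ.continuousOn).prod
          (isCompact_Icc.image_of_continuousOn hγ.continuousOn)
      obtain ⟨C, hC⟩ := hcomp.exists_bound_of_continuousOn
        (hK.continuous_iteratedFDeriv (hle i hi)).continuousOn
      exact ⟨C, fun _ s hs t ht => hC _ ⟨⟨t, ht, rfl⟩, ⟨s, hs, rfl⟩⟩⟩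
    · exact ⟨0, fun h => absurd h hi⟩
  choose D hD using hD
  choose C hC using hCb
  set D' := 1 + ∑ i ∈ Finset.range 5, |D i| with hD'
  set C' := ∑ i ∈ Finset.range 5, |C i| with hC'
  refine ⟨(Nat.factorial 4) * C' * D' ^ 4, fun s hs t ht => ?_⟩
  have hg : ContDiff ℝ 4 (fun p : E × E => K (p + (0, γ s))) := by fun_prop
  have hf : ContDiffOn ℝ 4 (LinearIsometry.inl ℝ E E ∘ γ) (Set.Icc 0 T) :=
    (LinearIsometry.inl ℝ E E).contDiff.comp_contDiffOn hγ
  have hfun : (fun t => K (γ t, γ s))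
      = (fun p : E × E => K (p + (0, γ s))) ∘ (LinearIsometry.inl ℝ E E ∘ γ) := by
    ext t; simp
  rw [hfun]
  refine norm_iteratedFDerivWithin_comp_le hg.contDiffOn hf (hle 4 le_rfl) uniqueDiffOn_univ hu
    (Set.mapsTo_univ _ _) ht ?_ ?_
  · intro i hi
    rw [iteratedFDerivWithin_univ, iteratedFDeriv_comp_add_right]
    have := hC i hi s hs t ht
    simp only [Function.comp, LinearIsometry.inl_apply, Prod.mk_add_mk, add_zero, zero_add]
    refine this.trans ((le_abs_self _).trans ?_)
    exact Finset.single_le_sum (f := fun i => |C i|) (fun _ _ => abs_nonneg _)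
      (Finset.mem_range.2 (by omega))
  · intro i h1 hi
    rw [(LinearIsometry.inl ℝ E E).norm_iteratedFDerivWithin_comp_left (hγ t ht) hu ht (hle i hi)]
    have h2 : |D i| ≤ ∑ i ∈ Finset.range 5, |D i| :=
      Finset.single_le_sum (f := fun i => |D i|) (fun _ _ => abs_nonneg _)
        (Finset.mem_range.2 (by omega))
    have h3 : 1 ≤ D' := by
      have : 0 ≤ ∑ i ∈ Finset.range 5, |D i| := Finset.sum_nonneg fun _ _ => abs_nonneg _
      linarith
    calc _ ≤ D i := hD i hi t ht
      _ ≤ D' := by linarith [le_abs_self (D i)]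
      _ ≤ D' ^ i := le_self_pow₀ h3 (by omega)

theorem occupation_kernel_simpsons_convergence
    {n : ℕ} (hn : 1 ≤ n) {H : Type*} [NormedAddCommGroup H] [InnerProductSpace ℝ H]
    [CompleteSpace H]
    (ι : H →ₗ[ℝ] (EuclideanSpace ℝ (Fin n) → ℝ)) (hι : Function.Injective ι)
    (k : EuclideanSpace ℝ (Fin n) → H)
    (hrep : ∀ (g : H) (x : EuclideanSpace ℝ (Fin n)), ι g x = ⟪g, k x⟫)
    (hK : ContDiff ℝ 4 (fun p : EuclideanSpace ℝ (Fin n) × EuclideanSpace ℝ (Fin n) =>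
      (⟪k p.2, k p.1⟫ : ℝ)))
    (T : ℝ) (hT : 0 < T)
    (γ : ℝ → EuclideanSpace ℝ (Fin n)) (hγ : ContDiffOn ℝ 4 γ (Set.Icc 0 T))
    (Γ : H) (hΓ : ∀ g : H, ⟪g, Γ⟫ = ∫ t in (0:ℝ)..T, ι g (γ t)) :
    ∃ C : ℝ, 0 ≤ C ∧ ∀ (F : ℕ), 2 ≤ F → Even F →
      ‖Γ - (T / F / 3) •
        (k (γ 0)
          + (4 : ℝ) • ∑ i ∈ Finset.Icc 1 (F / 2), k (γ (((2 * i - 1 : ℕ) : ℝ) * (T / F)))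
          + (2 : ℝ) • ∑ i ∈ Finset.Icc 1 (F / 2 - 1), k (γ (((2 * i : ℕ) : ℝ) * (T / F)))
          + k (γ T))‖ ^ 2 ≤ C * (T / F) ^ 4 := by
  obtain ⟨M, hM⟩ := slice_bound _ hK T hT γ hγ
  have hM0 : 0 ≤ M := (norm_nonneg _).trans (hM 0 ⟨le_rfl, hT.le⟩ 0 ⟨le_rfl, hT.le⟩)
  refine ⟨2 * T * (6 * T * M), by positivity, ?_⟩
  intro F hF hFe
  obtain ⟨m, rfl⟩ : ∃ m, F = 2 * (m + 1) := by
    obtain ⟨r, rfl⟩ := hFe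
    exact ⟨r - 1, by omega⟩
  set h : ℝ := T / ((2 * (m + 1) : ℕ) : ℝ) with hh
  have hpos : 0 < h := by positivity
  have hmh : (2 * ((m + 1 : ℕ) : ℝ)) * h = T := by
    rw [hh]; push_cast; field_simp
  have hdiv : 2 * (m + 1) / 2 = m + 1 := by omega
  have hre := simpson_sum_rearrange (fun j : ℕ => k (γ ((j : ℝ) * h))) m
  have hend : ((2 * (m + 1) : ℕ) : ℝ) * h = T := by rw [← hmh]; push_cast; ring
  simp only [hend, Nat.cast_zero, zero_mul] at hre
  rw [hdiv, Nat.add_sub_cancel, hre]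
  set S := ∑ j ∈ Finset.range (m + 1), (k (γ (((2 * j : ℕ) : ℝ) * h))
    + (4 : ℝ) • k (γ (((2 * j + 1 : ℕ) : ℝ) * h)) + k (γ (((2 * (j + 1) : ℕ) : ℝ) * h))) with hS
  set e := Γ - (h / 3) • S with he
  -- inner products with the Simpson sum
  have hinS : ∀ g : H, ⟪g, (h / 3) • S⟫ = h / 3 * ∑ j ∈ Finset.range (m + 1),
      (⟪g, k (γ (((2 * j : ℕ) : ℝ) * h))⟫ + 4 * ⟪g, k (γ (((2 * j + 1 : ℕ) : ℝ) * h))⟫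
        + ⟪g, k (γ (((2 * (j + 1) : ℕ) : ℝ) * h))⟫) := by
    intro g
    simp only [hS, inner_smul_right, inner_sum, inner_add_right]
  have hnode : ∀ i : ℕ, i ≤ 2 * (m + 1) → (i : ℝ) * h ∈ Set.Icc 0 T := by
    intro i hi
    refine ⟨by positivity, ?_⟩
    rw [← hend]
    gcongr
  -- pointwise bound
  have hpt : ∀ s ∈ Set.Icc 0 T, |⟪e, k (γ s)⟫| ≤ 6 * T * M * h ^ 4 := by
    intro s hs
    have hc : ContDiffOn ℝ 4 (fun t => (⟪k (γ s), k (γ t)⟫ : ℝ)) (Set.Icc 0 T) :=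
      hK.comp_contDiffOn (hγ.prodMk contDiffOn_const)
    have := simpson_composite (fun t => ⟪k (γ s), k (γ t)⟫) T M hT hc
      (hM s hs) (m + 1) h hpos hmh
    rw [real_inner_comm, he, inner_sub_right, hinS, hΓ]
    simpa only [hrep] using this
  rw [← real_inner_self_eq_norm_sq]
  have h0 : ⟪e, e⟫ = ⟪e, Γ⟫ - ⟪e, (h / 3) • S⟫ := by
    rw [← inner_sub_right]
  set B := 6 * T * M * h ^ 4 with hB
  have h1 : |⟪e, Γ⟫| ≤ B * T := by
    rw [hΓ, ← Real.norm_eq_abs]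
    have := intervalIntegral.norm_integral_le_of_norm_le_const (a := 0) (b := T) (C := B)
      (f := fun t => ι e (γ t)) (by
        intro t ht
        rw [Set.uIoc_of_le hT.le] at ht
        rw [hrep]
        exact hpt t ⟨ht.1.le, ht.2⟩)
    rwa [sub_zero, abs_of_pos hT] at this
  have h2 : |⟪e, (h / 3) • S⟫| ≤ B * T := by
    rw [hinS, abs_mul, abs_of_pos (by positivity : 0 < h / 3)]
    have : |∑ j ∈ Finset.range (m + 1),
      (⟪e, k (γ (((2 * j : ℕ) : ℝ) * h))⟫ + 4 * ⟪e, k (γ (((2 * j + 1 : ℕ) : ℝ) * h))⟫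
        + ⟪e, k (γ (((2 * (j + 1) : ℕ) : ℝ) * h))⟫)| ≤ ∑ j ∈ Finset.range (m + 1), 6 * B := by
      refine (Finset.abs_sum_le_sum_abs _ _).trans (Finset.sum_le_sum fun j hj => ?_)
      have hj' := Finset.mem_range.1 hj
      have a0 := abs_le.1 (hpt _ (hnode (2 * j) (by omega)))
      have a1 := abs_le.1 (hpt _ (hnode (2 * j + 1) (by omega)))
      have a2 := abs_le.1 (hpt _ (hnode (2 * (j + 1)) (by omega)))
      rw [abs_le]
      constructor <;> linarith [a0.1, a0.2, a1.1, a1.2, a2.1, a2.2]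
    rw [Finset.sum_const, Finset.card_range, nsmul_eq_mul] at this
    calc _ ≤ h / 3 * (((m + 1 : ℕ) : ℝ) * (6 * B)) := by gcongr
      _ = B * ((2 * ((m + 1 : ℕ) : ℝ)) * h) := by ring
      _ = B * T := by rw [hmh]
  rw [h0]
  have := (abs_le.1 h1).2
  have := (abs_le.1 h2).1
  calc _ ≤ 2 * T * B := by linarith
    _ = _ := by rw [hB]; ring
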